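/- arXiv:0711.3057 — 2 statements merged into one kernel-verified Lean document; each statement's English description precedes it below -/
import Mathlib

section
/- Let k ≥ 2 be even and m ≥ 2. Then the minimum cardinality of a set T of k-cycles in S_{m(k−1)+1} such that T generates S_{m(k−1)+1} is exactly m; that is, there is a set of m k-cycles generating S_{m(k−1)+1}, and no set of fewer than m k-cycles generates it. -/
/-!
Adding to a set of points the support of a permutation `g` that does not preserve it contributes at
most `|supp g| - 1` new points, and `g` preserves the enlarged set. Starting from a single point, a
transitive group generated by `T` thus acts on at most `1 + ∑_{g ∈ T} (|supp g| - 1)` points, so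
`m (k - 1) + 1` points require at least `m` cycles of length `k`.

Conversely, let `m ≥ 2` cycles of length `k` cover everything and share one point `p`, any two of
them meeting only there. If a block contains `p` and a point fixed by one of these cycles, then that
cycle preserves the block, which therefore contains its support; hence the group is primitive. The
commutator of two of the cycles is a 3-cycle, so by Jordan's theorem the group contains the
alternating group, and for even `k` it also contains an odd permutation.
-/

open Equiv Equiv.Perm MulAction
open scoped Finset Pointwise commutatorElement

section

variable {α ι : Type*} [Fintype α] [DecidableEq α]

theorem exists_superset_mapsTo_card_le (T : Finset (Perm α)) (S : Finset α) :
    ∃ S' : Finset α, S ⊆ S' ∧ (∀ g ∈ T, Set.MapsTo g S' S') ∧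
      #S' ≤ #S + ∑ g ∈ T, (#g.support - 1) := by
  induction T using Finset.strongInduction generalizing S with
  | H T ih =>
    by_cases hS : ∀ g ∈ T, Set.MapsTo g S S
    · exact ⟨S, subset_rfl, hS, Nat.le_add_right _ _⟩
    simp only [Set.MapsTo, not_forall, SetLike.mem_coe] at hS
    obtain ⟨g, hgT, x, hxS, hgx⟩ := hS
    have hxg : x ∈ g.support := mem_support.2 fun h ↦ hgx (h.symm ▸ hxS)
    have hcard : #(S ∪ g.support) ≤ #S + (#g.support - 1) := by
      have hunion := Finset.card_union_add_card_inter S g.support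
      have hinter : 0 < #(S ∩ g.support) := Finset.card_pos.2 ⟨x, Finset.mem_inter.2 ⟨hxS, hxg⟩⟩
      omega
    obtain ⟨S', hSS', hinv, hcard'⟩ := ih _ (Finset.erase_ssubset hgT) (S ∪ g.support)
    obtain ⟨hS', hgS'⟩ := Finset.union_subset_iff.1 hSS'
    refine ⟨S', hS', fun f hf y hy ↦ ?_, ?_⟩
    · obtain rfl | hfg := eq_or_ne f g
      · by_cases hfy : f y = y
        · rwa [hfy]
        · exact hgS' (apply_mem_support.2 (mem_support.2 hfy))
      · exact hinv f (Finset.mem_erase.2 ⟨hfg, hf⟩) hy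
    · rw [← Finset.add_sum_erase T _ hgT]
      omega

theorem card_le_sum_card_support_sub_one_add_one (T : Finset (Perm α))
    [IsPretransitive (Subgroup.closure (T : Set (Perm α))) α] :
    Fintype.card α ≤ ∑ g ∈ T, (#g.support - 1) + 1 := by
  cases isEmpty_or_nonempty α
  · simp
  obtain ⟨p⟩ : Nonempty α := inferInstance
  obtain ⟨S, hpS, hinv, hcard⟩ := exists_superset_mapsTo_card_le T {p}
  have hstab : Subgroup.closure (T : Set (Perm α)) ≤ stabilizer (Perm α) S :=
    (Subgroup.closure_le _).2 fun g hg ↦ mem_stabilizer_finset'.2 fun _ hx ↦ hinv g hg hx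
  have huniv : S = Finset.univ := Finset.eq_univ_of_forall fun x ↦ by
    obtain ⟨g, rfl⟩ := exists_smul_eq (Subgroup.closure (T : Set (Perm α))) p x
    exact mem_stabilizer_finset'.1 (hstab g.2) (Finset.singleton_subset_iff.1 hpS)
  rw [← Finset.card_univ, ← huniv]
  simpa only [Finset.card_singleton, add_comm] using hcard

theorem eq_top_of_alternatingGroup_le_of_sign_eq_neg_one {G : Subgroup (Perm α)}
    (hG : alternatingGroup α ≤ G) {g : Perm α} (hg : g ∈ G) (hsign : sign g = -1) : G = ⊤ := by
  refine (Subgroup.eq_top_iff' G).2 fun x ↦ ?_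
  obtain hx | hx := Int.units_eq_one_or (sign x)
  · exact hG (mem_alternatingGroup.2 hx)
  · have hxg : x * g ∈ G := hG (mem_alternatingGroup.2 (by simp [hx, hsign]))
    exact (Subgroup.mul_mem_cancel_right G hg).1 hxg

theorem disjoint_swap_mul_of_support_inter_eq_singleton {a b : Perm α} {p : α}
    (h : a.support ∩ b.support = {p}) : Perm.Disjoint (swap p (a p) * a) b := by
  have hmem (x : α) : (a x ≠ x ∧ b x ≠ x) ↔ x = p := by
    simpa only [Finset.mem_inter, mem_support, Finset.mem_singleton] using Finset.ext_iff.1 h x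
  refine fun x ↦ or_iff_not_imp_right.2 fun hbx ↦ ?_
  obtain rfl | hxp := eq_or_ne x p
  · simp
  have hax : a x = x := by_contra fun hax ↦ hxp ((hmem x).1 ⟨hax, hbx⟩)
  have hxap : x ≠ a p := fun hxap ↦ hxp (a.injective (hax.trans hxap))
  rw [mul_apply, hax, swap_apply_of_ne_of_ne hxp hxap]

theorem isThreeCycle_commutatorElement_of_support_inter_eq_singleton {a b : Perm α} {p : α}
    (h : a.support ∩ b.support = {p}) : ⁅a, b⁆.IsThreeCycle := by
  obtain ⟨hap, hbp⟩ : a p ≠ p ∧ b p ≠ p := by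
    simpa using h.ge (Finset.mem_singleton_self p)
  have hbap : b (a p) = a p := by
    by_contra hne
    have hmem : a p ∈ a.support ∩ b.support := by simpa [hap] using hne
    exact hap (Finset.mem_singleton.1 (h ▸ hmem))
  have hcomm := (disjoint_swap_mul_of_support_inter_eq_singleton h).commute.eq
  have hconj : b * swap p (a p) * b⁻¹ = swap (a p) (b p) := by
    rw [← swap_apply_apply, hbap, swap_comm]
  have heq : ⁅a, b⁆ = swap (a p) p * swap (a p) (b p) := calc
    ⁅a, b⁆ = swap p (a p) * ((swap p (a p) * a) * b) * a⁻¹ * b⁻¹ := by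
      simp [commutatorElement_def, ← mul_assoc]
    _ = swap p (a p) * (b * swap p (a p) * b⁻¹) := by rw [hcomm]; group
    _ = swap (a p) p * swap (a p) (b p) := by rw [hconj, swap_comm]
  rw [heq]
  exact isThreeCycle_swap_mul_swap_same hap (fun hab ↦ hbp (b.injective (hab ▸ hbap))) hbp.symm

theorem exists_isCycle_support_eq {s : Finset α} (hs : 2 ≤ #s) :
    ∃ f : Perm α, f.IsCycle ∧ f.support = s := by
  have hlen : 2 ≤ s.toList.length := by rwa [Finset.length_toList]
  refine ⟨s.toList.formPerm, List.isCycle_formPerm s.nodup_toList hlen, ?_⟩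
  rw [List.support_formPerm_of_nodup _ s.nodup_toList fun x hx ↦ by simp [hx] at hlen,
    Finset.toList_toFinset]

theorem support_subset_of_isBlock {G : Subgroup (Perm α)} {B : Set α} (hB : IsBlock G B)
    {g : Perm α} (hg : g ∈ G) (hcycle : g.IsCycle) {x y : α} (hxB : x ∈ B) (hx : g x = x)
    (hyB : y ∈ B) (hy : y ∈ g.support) : (g.support : Set α) ⊆ B := by
  intro z hz
  obtain ⟨n, rfl⟩ := hcycle.exists_pow_eq (mem_support.1 hy) (mem_support.1 hz)
  let h : G := ⟨g, hg⟩ ^ n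
  have hhx : h • x = x := pow_apply_eq_self_of_apply_eq_self hx n
  have hhB : h • B = B := hB.smul_eq_of_mem hxB (hhx.symm ▸ hxB)
  exact hhB ▸ Set.smul_mem_smul_set (a := h) hyB

/-- A star of cycles: a family `c` of cycles that all move the centre `p`, while each other point
is moved by exactly one of them. Stars with at least
two cycles, one of them of even length, are the small generating sets constructed here. -/
structure IsCycleStar (c : ι → Perm α) (p : α) : Prop where
  isCycle (i : ι) : (c i).IsCycle
  center_mem (i : ι) : p ∈ (c i).support
  existsUnique_mem {x : α} (hx : x ≠ p) : ∃! i, x ∈ (c i).support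

namespace IsCycleStar

variable {c : ι → Perm α} {p : α}

theorem support_inter_eq_singleton (hc : IsCycleStar c p) {i j : ι} (hij : i ≠ j) :
    (c i).support ∩ (c j).support = {p} := by
  refine Finset.Subset.antisymm (fun x hx ↦ Finset.mem_singleton.2 <| by_contra fun hxp ↦ ?_) ?_
  · obtain ⟨hi, hj⟩ := Finset.mem_inter.1 hx
    exact hij ((hc.existsUnique_mem hxp).unique hi hj)
  · simpa only [Finset.singleton_subset_iff, Finset.mem_inter] using
      ⟨hc.center_mem i, hc.center_mem j⟩

theorem injective (hc : IsCycleStar c p) : Function.Injective c := by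
  intro i j hij
  have hp : c i p ≠ p := mem_support.1 (hc.center_mem i)
  have hi : c i p ∈ (c i).support := apply_mem_support.2 (hc.center_mem i)
  exact (hc.existsUnique_mem hp).unique hi (hij ▸ hi)

theorem isPreprimitive_closure_range [Nontrivial ι] (hc : IsCycleStar c p) :
    IsPreprimitive (Subgroup.closure (Set.range c)) α := by
  have hmem (i : ι) : c i ∈ Subgroup.closure (Set.range c) := Subgroup.subset_closure ⟨i, rfl⟩
  refine .of_isTrivialBlock_of_notMem_fixedPoints (a := p) (fun hfix ↦ ?_) fun B hpB hB ↦
    or_iff_not_imp_left.2 fun hnontriv ↦ ?_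
  · obtain ⟨i⟩ : Nonempty ι := inferInstance
    exact mem_support.1 (hc.center_mem i) (hfix ⟨c i, hmem i⟩)
  have hpropagate {x : α} (hxB : x ∈ B) (hxp : x ≠ p) {i j : ι} (hxi : x ∈ (c i).support)
      (hji : j ≠ i) : ((c j).support : Set α) ⊆ B := by
    have hxj : c j x = x :=
      notMem_support.1 fun hxj ↦ hji ((hc.existsUnique_mem hxp).unique hxj hxi)
    exact support_subset_of_isBlock hB (hmem j) (hc.isCycle j) hxB hxj hpB (hc.center_mem j)
  obtain ⟨x, hxB, hxp⟩ := (Set.not_subsingleton_iff.1 hnontriv).exists_ne p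
  obtain ⟨i, hxi, -⟩ := hc.existsUnique_mem hxp
  obtain ⟨j, hji⟩ := exists_ne i
  have hjp : c j p ∈ (c j).support := apply_mem_support.2 (hc.center_mem j)
  have hsupport (l : ι) : ((c l).support : Set α) ⊆ B := by
    obtain rfl | hli := eq_or_ne l i
    · exact hpropagate (hpropagate hxB hxp hxi hji hjp) (mem_support.1 (hc.center_mem j)) hjp
        hji.symm
    · exact hpropagate hxB hxp hxi hli
  refine Set.eq_univ_of_forall fun y ↦ ?_
  obtain rfl | hyp := eq_or_ne y p
  · exact hpB
  · obtain ⟨l, hyl, -⟩ := hc.existsUnique_mem hyp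
    exact hsupport l hyl

theorem closure_range_eq_top [Nontrivial ι] (hc : IsCycleStar c p) {i : ι}
    (heven : Even #(c i).support) : Subgroup.closure (Set.range c) = ⊤ := by
  have hmem (j : ι) : c j ∈ Subgroup.closure (Set.range c) := Subgroup.subset_closure ⟨j, rfl⟩
  obtain ⟨j, hji⟩ := exists_ne i
  have hcomm : ⁅c i, c j⁆ ∈ Subgroup.closure (Set.range c) :=
    mul_mem (mul_mem (mul_mem (hmem i) (hmem j)) (inv_mem (hmem i))) (inv_mem (hmem j))
  have halt : alternatingGroup α ≤ Subgroup.closure (Set.range c) :=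
    alternatingGroup_le_of_isPreprimitive_of_isThreeCycle_mem hc.isPreprimitive_closure_range
      (isThreeCycle_commutatorElement_of_support_inter_eq_singleton
        (hc.support_inter_eq_singleton hji.symm)) hcomm
  refine eq_top_of_alternatingGroup_le_of_sign_eq_neg_one halt (hmem i) ?_
  rw [(hc.isCycle i).sign, heven.neg_one_pow]

end IsCycleStar

theorem exists_isCycleStar [Fintype ι] {k : ι → ℕ} (hk : ∀ i, 2 ≤ k i)
    (hα : Fintype.card α = ∑ i, (k i - 1) + 1) :
    ∃ (c : ι → Perm α) (p : α), IsCycleStar c p ∧ ∀ i, #(c i).support = k i := by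
  let e : Option (Σ i, Fin (k i - 1)) ≃ α := Fintype.equivOfCardEq (by simp [hα])
  let s (i : ι) : Finset α :=
    (Finset.insertNone (Finset.univ.map (Function.Embedding.sigmaMk i))).map e.toEmbedding
  have hs (i : ι) : #(s i) = k i := by
    have := hk i
    simp only [s, Finset.card_map, Finset.card_insertNone, Finset.card_univ, Fintype.card_fin]
    omega
  choose c hc hsupp using fun i ↦ exists_isCycle_support_eq ((hk i).trans_eq (hs i).symm)
  have hnone (i : ι) : e none ∈ (c i).support := by simp [hsupp, s]
  have hsome (i j : ι) (a : Fin (k i - 1)) : e (some ⟨i, a⟩) ∈ (c j).support ↔ j = i := by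
    simp only [hsupp, s, Finset.mem_map_equiv, symm_apply_apply, Finset.mem_insertNone]
    constructor
    · simp only [Option.mem_some_iff, forall_eq', Finset.mem_map, Finset.mem_univ, true_and]
      rintro ⟨b, hb⟩
      exact congrArg Sigma.fst hb
    · rintro rfl
      simp
  refine ⟨c, e none, ⟨hc, hnone, fun {x} hx ↦ ?_⟩, fun i ↦ by rw [hsupp, hs]⟩
  obtain ⟨_ | ⟨i, a⟩, rfl⟩ := e.surjective x
  · exact absurd rfl hx
  · exact ⟨i, (hsome i i a).2 rfl, fun j hj ↦ (hsome i j a).1 hj⟩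

theorem stmt_5_general {k m : ℕ} (hk : 2 ≤ k) (hkeven : Even k) (hm : 2 ≤ m)
    (hα : Fintype.card α = m * (k - 1) + 1) :
    IsLeast {c : ℕ | ∃ T : Finset (Perm α),
        (∀ g ∈ T, g.IsCycle ∧ #g.support = k) ∧
        Subgroup.closure (T : Set (Perm α)) = ⊤ ∧ #T = c} m := by
  constructor
  · have : Nontrivial (Fin m) := Fin.nontrivial_iff_two_le.2 hm
    obtain ⟨c, p, hc, hcard⟩ :=
      exists_isCycleStar (α := α) (ι := Fin m) (k := fun _ ↦ k) (fun _ ↦ hk) (by simp [hα])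
    refine ⟨Finset.univ.map ⟨c, hc.injective⟩, by simp [hc.isCycle, hcard], ?_, by simp⟩
    have heven : Even #(c ⟨0, by omega⟩).support := by rwa [hcard]
    simpa using hc.closure_range_eq_top heven
  · rintro _ ⟨T, hT, hgen, rfl⟩
    have : IsPretransitive (Subgroup.closure (T : Set (Perm α))) α :=
      ⟨fun x y ↦ ⟨⟨swap x y, hgen ▸ Subgroup.mem_top _⟩, swap_apply_left x y⟩⟩
    have hsum : ∑ g ∈ T, (#g.support - 1) = #T * (k - 1) :=
      Finset.sum_const_nat fun g hg ↦ by rw [(hT g hg).2]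
    have hle := card_le_sum_card_support_sub_one_add_one T
    rw [hα, hsum, Nat.add_le_add_iff_right] at hle
    exact Nat.le_of_mul_le_mul_right hle (by omega)

end

/-- For even `k ≥ 2` and `m ≥ 2`, the minimum cardinality of a set
of `k`-cycles generating `S_{m(k−1)+1}` is exactly `m`:
`m` belongs to the set of achievable cardinalities and is a lower bound for it. -/
theorem stmt_5 (k m : ℕ) (hk : 2 ≤ k) (hkeven : Even k) (hm : 2 ≤ m) :
    IsLeast {c : ℕ | ∃ T : Finset (Equiv.Perm (Fin (m * (k - 1) + 1))),
        (∀ g ∈ T, g.IsCycle ∧ g.support.card = k) ∧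
        Subgroup.closure (T : Set (Equiv.Perm (Fin (m * (k - 1) + 1)))) = ⊤ ∧
        T.card = c} m :=
  stmt_5_general hk hkeven hm (Fintype.card_fin _)
end

section
/- Let k be an odd positive integer and n ≥ k(2k+1)+1. Then the minimum cardinality of a subset T of the extended conjugacy class C(B_k) in S_n (permutations that are products of exactly k disjoint transpositions) such that T generates S_n is exactly ⌈(n−1)/k⌉. -/
/-!
Lower bound. The cycles of the generators are transpositions, `k` for each generator. They still
generate a transitive group, so they are the edges of a connected graph on `n` vertices, which has
at least `n - 1` edges.

Upper bound. Let `m + 1 = ⌈(n - 1) / k⌉`. The broom is the tree on `0, …, k * m` in which the root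
`0` is joined to `1, …, m`, and `e + 1` is joined to `e` for `m ≤ e < k * m`. Sorting its edges by
the residue of the larger end modulo `m` gives `m` matchings of size `k`, and one more matching of
size `k` attaches the at most `k` remaining vertices: the `m + 1` involutions that swap the ends of
the edges of a matching generate a transitive group. Two of these matchings meet in the root only,
so the commutator of their involutions is a `3`-cycle, which moves the root and the leaf `1`. A
nontrivial block containing `1` is stable under the `3`-cycle, hence contains the root, and is
stable under every generator, since each of them fixes `1` or sends it to the root. So the group is
primitive, and by Jordan's theorem it contains the alternating group. As `k` is odd, the generators
are odd permutations.
-/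

open Equiv Equiv.Perm MulAction
open scoped Pointwise commutatorElement

section LowerBound

variable {α : Type*} [Fintype α] [DecidableEq α]

theorem card_le_card_add_one_of_isSwap {S : Finset (Perm α)} (hS : ∀ f ∈ S, f.IsSwap)
    [IsPretransitive (Subgroup.closure (S : Set (Perm α))) α] :
    Fintype.card α ≤ S.card + 1 := by
  cases isEmpty_or_nonempty α
  · simp
  let G : SimpleGraph α :=
    { Adj x y := x ≠ y ∧ swap x y ∈ S
      symm := ⟨fun x y h => ⟨h.1.symm, swap_comm x y ▸ h.2⟩⟩
      loopless := ⟨fun x h => h.1 rfl⟩ }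
  have reachable_apply : ∀ g ∈ Subgroup.closure (S : Set (Perm α)), ∀ x, G.Reachable x (g x) := by
    intro g hg
    induction hg using Subgroup.closure_induction with
    | mem f hf =>
      obtain ⟨y, z, hyz, rfl⟩ := hS f hf
      have hadj : G.Adj y z := ⟨hyz, hf⟩
      intro x
      rw [swap_apply_def]
      split_ifs with hy hz
      · exact hy ▸ hadj.reachable
      · exact hz ▸ hadj.reachable.symm
      · rfl
    | one => exact fun x => .rfl
    | mul g h _ _ ihg ihh => exact fun x => (ihh x).trans (ihg (h x))
    | inv g _ ih => exact fun x => by simpa using (ih (g⁻¹ x)).symm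
  have connected : G.Connected := by
    refine (SimpleGraph.connected_iff G).2 ⟨fun x y => ?_, ‹_›⟩
    obtain ⟨g, rfl⟩ := exists_smul_eq (Subgroup.closure (S : Set (Perm α))) x y
    exact reachable_apply g g.2 x
  let toSwap : Sym2 α → Perm α := Sym2.lift ⟨swap, swap_comm⟩
  have card_edges : G.edgeSet.ncard ≤ (S : Set (Perm α)).ncard := by
    refine Set.ncard_le_ncard_of_injOn toSwap ?_ ?_
    · rintro ⟨x, y⟩ hxy
      exact hxy.2
    · rintro ⟨x, y⟩ hxy ⟨z, w⟩ hzw h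
      have hsupp := congrArg support (show swap x y = swap z w from h)
      rw [support_swap hxy.1, support_swap hzw.1] at hsupp
      have := congrArg (fun s : Finset α => (s : Set α)) hsupp
      simpa [Set.pair_eq_pair_iff] using this
  have := connected.card_vert_le_card_edgeSet_add_one
  rw [Nat.card_eq_fintype_card, Nat.card_coe_set_eq] at this
  rw [Set.ncard_coe_finset] at card_edges
  omega

theorem isSwap_of_mem_cycleFactorsFinset {f g : Perm α} (hg : g ^ 2 = 1)
    (hf : f ∈ g.cycleFactorsFinset) : f.IsSwap :=
  card_support_eq_two.1 <| pow_prime_eq_one_iff.1 hg _ <| Multiset.mem_map_of_mem _ hf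

theorem card_le_sum_card_cycleType_add_one {T : Finset (Perm α)} (hT : ∀ g ∈ T, g ^ 2 = 1)
    [IsPretransitive (Subgroup.closure (T : Set (Perm α))) α] :
    Fintype.card α ≤ ∑ g ∈ T, g.cycleType.card + 1 := by
  set S := T.biUnion cycleFactorsFinset
  have isSwap_of_mem : ∀ f ∈ S, f.IsSwap := fun f hf => by
    obtain ⟨g, hg, hfg⟩ := Finset.mem_biUnion.1 hf
    exact isSwap_of_mem_cycleFactorsFinset (hT g hg) hfg
  have closure_le : Subgroup.closure (T : Set (Perm α)) ≤ Subgroup.closure S := by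
    refine (Subgroup.closure_le _).2 fun g hg => ?_
    rw [SetLike.mem_coe, ← cycleFactorsFinset_noncommProd g]
    exact Subgroup.noncommProd_mem _ _ fun f hf =>
      Subgroup.subset_closure (Finset.mem_biUnion.2 ⟨g, hg, hf⟩)
  have : IsPretransitive (Subgroup.closure (S : Set (Perm α))) α :=
    ⟨fun x y => (exists_smul_eq (Subgroup.closure (T : Set (Perm α))) x y).imp'
      (Subgroup.inclusion closure_le) fun _ h => h⟩
  calc Fintype.card α ≤ S.card + 1 := card_le_card_add_one_of_isSwap isSwap_of_mem
    _ ≤ ∑ g ∈ T, g.cycleFactorsFinset.card + 1 := by gcongr; exact Finset.card_biUnion_le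
    _ = ∑ g ∈ T, g.cycleType.card + 1 := by simp [cycleType_def]

theorem card_le_card_mul_add_one {k : ℕ} {T : Finset (Perm α)}
    (hT : ∀ g ∈ T, g.cycleType = Multiset.replicate k 2)
    (hgen : Subgroup.closure (T : Set (Perm α)) = ⊤) : Fintype.card α ≤ T.card * k + 1 := by
  have : IsPretransitive (Subgroup.closure (T : Set (Perm α))) α :=
    ⟨fun x y => ⟨⟨swap x y, hgen ▸ Subgroup.mem_top _⟩, swap_apply_left x y⟩⟩
  have hsq : ∀ g ∈ T, g ^ 2 = 1 := fun g hg =>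
    pow_prime_eq_one_iff.2 fun c hc => Multiset.eq_of_mem_replicate (hT g hg ▸ hc)
  calc Fintype.card α ≤ ∑ g ∈ T, g.cycleType.card + 1 := card_le_sum_card_cycleType_add_one hsq
    _ = T.card * k + 1 := by
      rw [Finset.sum_const_nat fun g hg => by rw [hT g hg, Multiset.card_replicate]]

end LowerBound

section Generation

theorem commutatorElement_eq_swap_mul_swap {α : Type*} [DecidableEq α] {a b : Perm α} {x : α}
    (hbx : b x ≠ x) (h : ∀ w, a w ≠ w → b w ≠ w → w = x) :
    ⁅a, b⁆ = swap (a x) (b x) * swap x (b x) := by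
  set s := swap x (b x)
  have habx : a (b x) = b x := by
    by_contra habx
    exact hbx (h _ habx fun hbbx => hbx (b.injective hbbx))
  -- `s * b` is `b` with `x` cut out of its cycle, so it commutes with `a`.
  have hdisj : Perm.Disjoint (s * b) a := by
    intro w
    by_cases haw : a w = w
    · exact .inr haw
    by_cases hwx : w = x
    · exact .inl (by simp [s, hwx])
    have hbw : b w = w := by_contra fun hbw => hwx (h w haw hbw)
    refine .inl ?_
    rw [mul_apply, hbw, swap_apply_of_ne_of_ne hwx]
    rintro rfl
    exact hbx (b.injective hbw)
  have hconj : b * a⁻¹ * b⁻¹ = s * a⁻¹ * s⁻¹ := by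
    have := hdisj.commute.inv_right.eq
    rw [mul_inv_eq_iff_eq_mul, mul_assoc, mul_assoc, ← inv_mul_eq_iff_eq_mul]
    simpa [s, mul_assoc] using this
  calc ⁅a, b⁆ = a * (b * a⁻¹ * b⁻¹) := by simp only [commutatorElement_def, mul_assoc]
    _ = (a * s * a⁻¹) * s := by rw [hconj, swap_inv]; simp only [s, mul_assoc]
    _ = swap (a x) (b x) * s := by rw [← swap_apply_apply, habx]

variable {α : Type*}

theorem isPretransitive_closure_of_exists_apply_lt [Preorder α] [OrderBot α] [WellFoundedLT α]
    {T : Set (Perm α)} (h : ∀ v ≠ ⊥, ∃ g ∈ T, g v < v) :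
    IsPretransitive (Subgroup.closure T) α := by
  refine (isPretransitive_iff_base (⊥ : α)).2 fun v => ?_
  induction v using WellFoundedLT.induction with
  | ind v ih =>
    by_cases hv : v = ⊥
    · exact ⟨1, by rw [one_smul, hv]⟩
    obtain ⟨g, hgT, hgv⟩ := h v hv
    obtain ⟨f, hf⟩ := ih (g v) hgv
    let g' : Subgroup.closure T := ⟨g, Subgroup.subset_closure hgT⟩
    exact ⟨g'⁻¹ * f, by rw [mul_smul, hf, inv_smul_eq_iff]; rfl⟩

theorem smul_eq_of_isBlock_of_isCycle_of_prime [Finite α] {G : Subgroup (Perm α)} {B : Set α}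
    (hB : IsBlock G B) (hBnt : B.Nontrivial) {c : G} (hc : (c : Perm α).IsCycle)
    (hp : (orderOf c).Prime) {y : α} (hyB : y ∈ B) (hcy : (c : Perm α) y ≠ y) : c • B = B := by
  obtain ⟨w, hwB, hwy⟩ := hBnt.exists_ne y
  by_cases hcw : (c : Perm α) w = w
  · exact hB.smul_eq_of_mem hwB (hcw.symm ▸ hwB : (c : Perm α) w ∈ B)
  obtain ⟨i, hi⟩ := hc.exists_pow_eq hcy hcw
  have hpow : c ^ i • B = B := hB.smul_eq_of_mem hyB (hi.symm ▸ hwB : ((c : Perm α) ^ i) y ∈ B)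
  have hcop : i.Coprime (orderOf c) := by
    refine ((Nat.Prime.coprime_iff_not_dvd hp).2 fun hdvd => hwy ?_).symm
    have hci : (c : Perm α) ^ i = 1 := mod_cast orderOf_dvd_iff_pow_eq_one.1 hdvd
    rw [← hi, hci, one_apply]
  obtain ⟨r, hr⟩ := exists_pow_eq_self_of_coprime hcop
  rw [← mem_stabilizer_iff] at hpow ⊢
  exact hr ▸ pow_mem hpow r

theorem isPreprimitive_closure_of_isCycle_of_prime [Finite α] {T : Set (Perm α)}
    [IsPretransitive (Subgroup.closure T) α] {c : Perm α} (hcT : c ∈ Subgroup.closure T)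
    (hc : c.IsCycle) (hp : (orderOf c).Prime) {x y : α} (hcx : c x ≠ x) (hcy : c y ≠ y)
    (hT : ∀ g ∈ T, g y = y ∨ g y = x) : IsPreprimitive (Subgroup.closure T) α := by
  refine .of_isTrivialBlock_base y fun {B} hyB hB => or_iff_not_imp_left.2 fun hBnt => ?_
  have hBnt := Set.not_subsingleton_iff.1 hBnt
  have hxB : x ∈ B := by
    let c' : Subgroup.closure T := ⟨c, hcT⟩
    have hcB : c' ∈ stabilizer (Subgroup.closure T) B :=
      smul_eq_of_isBlock_of_isCycle_of_prime hB hBnt hc (by rwa [← Subgroup.orderOf_coe]) hyB hcy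
    obtain ⟨i, hi⟩ := hc.exists_pow_eq hcy hcx
    rw [← mem_stabilizer_iff.1 (pow_mem hcB i)]
    exact ⟨y, hyB, hi⟩
  have hstab : Subgroup.closure T ≤ stabilizer (Perm α) B := by
    refine (Subgroup.closure_le _).2 fun g hgT => ?_
    have hgy : g y ∈ B := by rcases hT g hgT with h | h <;> rwa [h]
    exact hB.smul_eq_of_mem (g := ⟨g, Subgroup.subset_closure hgT⟩) hyB hgy
  refine Set.eq_univ_of_forall fun v => ?_
  obtain ⟨g, rfl⟩ := exists_smul_eq (Subgroup.closure T) y v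
  rw [← mem_stabilizer_iff.1 (hstab g.2)]
  exact ⟨y, hyB, rfl⟩

variable [Fintype α] [DecidableEq α]

theorem eq_top_of_alternatingGroup_le {G : Subgroup (Perm α)} (hG : alternatingGroup α ≤ G)
    {a : Perm α} (ha : a ∈ G) (hsign : sign a = -1) : G = ⊤ := by
  refine eq_top_iff.2 fun g _ => ?_
  rcases Int.units_eq_one_or (sign g) with hg | hg
  · exact hG (mem_alternatingGroup.2 hg)
  · have : g * a ∈ alternatingGroup α := mem_alternatingGroup.2 (by simp [hg, hsign])
    exact (mul_mem_cancel_right ha).1 (hG this)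

theorem closure_eq_top_of_support_inter_eq_singleton {T : Set (Perm α)}
    [IsPretransitive (Subgroup.closure T) α] {a b : Perm α} (haT : a ∈ T) (hbT : b ∈ T) {x : α}
    (hab : a.support ∩ b.support = {x}) (hT : ∀ g ∈ T, g (a x) = a x ∨ g (a x) = x)
    (hodd : ∃ g ∈ T, sign g = -1) : Subgroup.closure T = ⊤ := by
  have hmem : ∀ w, a w ≠ w → b w ≠ w → w = x := fun w haw hbw => by
    simpa [haw, hbw] using Finset.ext_iff.1 hab w
  obtain ⟨hax, hbx⟩ : a x ≠ x ∧ b x ≠ x := by simpa using Finset.ext_iff.1 hab x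
  have hba : a x ≠ b x := fun h =>
    hax (hmem _ (a.injective.ne hax) (h ▸ b.injective.ne hbx))
  have hcomm := commutatorElement_eq_swap_mul_swap hbx hmem
  have hcycle : IsThreeCycle ⁅a, b⁆ := by
    rw [hcomm, swap_comm (a x), swap_comm x]
    exact isThreeCycle_swap_mul_swap_same hba.symm hbx hax
  have hcT : ⁅a, b⁆ ∈ Subgroup.closure T :=
    Subgroup.commutator_le_self _ <| Subgroup.commutator_mem_commutator
      (Subgroup.subset_closure haT) (Subgroup.subset_closure hbT)
  have hprim : IsPreprimitive (Subgroup.closure T) α := by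
    refine isPreprimitive_closure_of_isCycle_of_prime hcT hcycle.isCycle
      (hcycle.orderOf.symm ▸ Nat.prime_three) (x := x) (y := a x) ?_ ?_ hT
    · rw [hcomm]; simp only [Perm.mul_apply, swap_apply_def]; grind
    · rw [hcomm]; simp only [Perm.mul_apply, swap_apply_def]; grind
  obtain ⟨g, hgT, hg⟩ := hodd
  exact eq_top_of_alternatingGroup_le
    (alternatingGroup_le_of_isPreprimitive_of_isThreeCycle_mem hprim hcycle hcT)
    (Subgroup.subset_closure hgT) hg

end Generation

section MatchingPerm

variable {ι α : Type*} [Fintype ι] [DecidableEq α]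

/-- The involution that exchanges the two ends of each edge of a matching. The edges of the
matching, indexed by `ι`, are the pairs `f (inl i)`, `f (inr i)`. -/
def matchingPerm (f : ι ⊕ ι ↪ α) : Perm α :=
  Perm.viaFintypeEmbedding (Equiv.sumComm ι ι) f

variable (f : ι ⊕ ι ↪ α)

theorem matchingPerm_apply_inl (i : ι) : matchingPerm f (f (.inl i)) = f (.inr i) :=
  Perm.viaFintypeEmbedding_apply_image _ _ _

theorem matchingPerm_apply_inr (i : ι) : matchingPerm f (f (.inr i)) = f (.inl i) :=
  Perm.viaFintypeEmbedding_apply_image _ _ _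

theorem matchingPerm_apply_of_notMem_range {w : α} (hw : w ∉ Set.range f) :
    matchingPerm f w = w :=
  Perm.viaFintypeEmbedding_apply_notMem_range _ _ hw

theorem matchingPerm_sq : matchingPerm f ^ 2 = 1 := by
  ext w
  rw [sq, Perm.mul_apply, Perm.one_apply]
  by_cases hw : w ∈ Set.range f
  · obtain ⟨i | i, rfl⟩ := hw <;> simp only [matchingPerm_apply_inl, matchingPerm_apply_inr]
  · simp only [matchingPerm_apply_of_notMem_range f hw]

variable [Fintype α]

theorem support_matchingPerm : (matchingPerm f).support = Finset.univ.map f := by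
  ext w
  rw [mem_support, Finset.mem_map]
  constructor
  · intro hw
    by_contra! h
    exact hw (matchingPerm_apply_of_notMem_range f fun ⟨i, hi⟩ => h i (Finset.mem_univ i) hi)
  · rintro ⟨i | i, -, rfl⟩
    · simp [matchingPerm_apply_inl]
    · simp [matchingPerm_apply_inr]

theorem cycleType_matchingPerm :
    (matchingPerm f).cycleType = Multiset.replicate (Fintype.card ι) 2 := by
  have hcycle := cycleType_of_pow_prime_eq_one (matchingPerm_sq f)
  have hsum := sum_cycleType (matchingPerm f)
  rw [hcycle, Multiset.sum_replicate, support_matchingPerm, Finset.card_map, Finset.card_univ,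
    Fintype.card_sum, smul_eq_mul] at hsum
  rw [hcycle]
  congr 1
  omega

end MatchingPerm

section Broom

variable {k m n : ℕ}

theorem add_mul_lt_mul {j q : ℕ} (hj : j < m) (hq : q < k) : j + m * q < k * m :=
  (finProdFinEquiv (⟨q, hq⟩, ⟨j, hj⟩)).isLt

theorem add_mul_add_le {j q r : ℕ} (h : q < r) : j + m * q + m ≤ j + m * r := by
  have := Nat.mul_le_mul_left m h
  grind

variable (hn : k * m < n) (j : Fin m)

/-- The larger end of the `q`-th edge in the `j`-th of the `m` matchings into which the edges of
the broom are sorted. -/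
def broomChild (q : Fin k) : Fin n :=
  ⟨j + m * q + 1, by have := add_mul_lt_mul j.2 q.2; omega⟩

/-- The smaller end of the edge whose larger end is `broomChild hn j q`. The edges with `q = 0`
are the ones at the root of the broom. -/
def broomParent (q : Fin k) : Fin n :=
  ⟨if (q : ℕ) = 0 then 0 else j + m * q, by
    have := add_mul_lt_mul j.2 q.2; split_ifs <;> omega⟩

theorem broomParent_lt_broomChild (q : Fin k) : broomParent hn j q < broomChild hn j q := by
  simp only [broomParent, broomChild, Fin.lt_def]
  split_ifs <;> omega

theorem broomChild_lt_broomParent (hm : 2 ≤ m) {q r : Fin k} (h : q < r) :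
    broomChild hn j q < broomParent hn j r := by
  have := add_mul_add_le (m := m) (j := j) (Fin.lt_def.1 h)
  simp only [broomChild, broomParent, Fin.lt_def]
  split_ifs <;> omega

theorem broomChild_strictMono (hm : 2 ≤ m) : StrictMono (broomChild hn j) := fun _ r h =>
  (broomChild_lt_broomParent hn j hm h).trans (broomParent_lt_broomChild hn j r)

theorem broomParent_strictMono (hm : 2 ≤ m) : StrictMono (broomParent hn j) := fun q _ h =>
  (broomParent_lt_broomChild hn j q).trans (broomChild_lt_broomParent hn j hm h)

theorem broomChild_ne_broomParent (hm : 2 ≤ m) (q r : Fin k) :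
    broomChild hn j q ≠ broomParent hn j r := by
  rcases lt_or_ge q r with h | h
  · exact (broomChild_lt_broomParent hn j hm h).ne
  · exact (((broomParent_strictMono hn j hm).monotone h).trans_lt
      (broomParent_lt_broomChild hn j q)).ne'

/-- The `j`-th of the matchings into which the edges of the broom are sorted. -/
def broomMatching (hm : 2 ≤ m) : Fin k ⊕ Fin k ↪ Fin n :=
  ⟨Sum.elim (broomChild hn j) (broomParent hn j),
    (broomChild_strictMono hn j hm).injective.sumElim (broomParent_strictMono hn j hm).injective
      (broomChild_ne_broomParent hn j hm)⟩

/-- The involution that exchanges the ends of the edges of the `j`-th matching of the broom. -/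
def broomPerm (hm : 2 ≤ m) : Perm (Fin n) := matchingPerm (broomMatching hn j hm)

variable (hm : 2 ≤ m)

theorem broomPerm_broomChild (q : Fin k) :
    broomPerm hn j hm (broomChild hn j q) = broomParent hn j q :=
  matchingPerm_apply_inl (broomMatching hn j hm) q

theorem broomPerm_broomParent (q : Fin k) :
    broomPerm hn j hm (broomParent hn j q) = broomChild hn j q :=
  matchingPerm_apply_inr (broomMatching hn j hm) q

theorem mem_support_broomPerm {w : Fin n} : w ∈ (broomPerm hn j hm).support ↔
    (∃ q, broomChild hn j q = w) ∨ ∃ q, broomParent hn j q = w := by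
  simp [broomPerm, support_matchingPerm, broomMatching, -mem_support]

theorem exists_val_eq_of_mem_support_broomPerm [NeZero n] {w : Fin n} (hw : w ≠ 0)
    (hwj : w ∈ (broomPerm hn j hm).support) :
    ∃ q : Fin k, w.val = j + m * q + 1 ∨ q.val ≠ 0 ∧ w.val = j + m * q := by
  rcases (mem_support_broomPerm hn j hm).1 hwj with ⟨q, rfl⟩ | ⟨q, rfl⟩
  · exact ⟨q, .inl rfl⟩
  · have hq : q.val ≠ 0 := fun hq => hw (by simp [broomParent, hq])
    exact ⟨q, .inr ⟨hq, if_neg hq⟩⟩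

theorem support_broomPerm_inter_support_broomPerm [NeZero n] (hk : 0 < k) {i j : Fin m}
    (hij : i < j) (hgap : k = 1 ∨ (i : ℕ) + 2 ≤ j ∧ (j : ℕ) + 2 ≤ i + m) :
    (broomPerm hn i hm).support ∩ (broomPerm hn j hm).support = {0} := by
  have root_mem (i : Fin m) : 0 ∈ (broomPerm hn i hm).support :=
    (mem_support_broomPerm hn i hm).2 <| .inr ⟨⟨0, hk⟩, by simp [broomParent]⟩
  refine Finset.Subset.antisymm (fun w hw => ?_) (by simp [root_mem, -mem_support])
  obtain ⟨hwi, hwj⟩ := Finset.mem_inter.1 hw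
  rw [Finset.mem_singleton]
  by_contra hw0
  obtain ⟨q, hq⟩ := exists_val_eq_of_mem_support_broomPerm hn i hm hw0 hwi
  obtain ⟨r, hr⟩ := exists_val_eq_of_mem_support_broomPerm hn j hm hw0 hwj
  rcases hgap with rfl | hgap
  · obtain rfl : q = r := Subsingleton.elim q r
    omega
  rcases lt_trichotomy q r with h | rfl | h
  · have := add_mul_add_le (m := m) (j := i) h
    omega
  · omega
  · have := add_mul_add_le (m := m) (j := j) h
    omega

theorem broomPerm_apply_eq_or_eq_zero [NeZero n] {v : Fin n} (hv : v ≠ 0) (hvm : v.val < m) :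
    broomPerm hn j hm v = v ∨ broomPerm hn j hm v = 0 := by
  refine or_iff_not_imp_left.2 fun hmove => ?_
  rcases (mem_support_broomPerm hn j hm).1 (mem_support.2 hmove) with ⟨q, rfl⟩ | ⟨q, rfl⟩
  · have hq : (q : ℕ) = 0 := by
      by_contra hq
      have := Nat.le_mul_of_pos_right m (Nat.pos_of_ne_zero hq)
      simp only [broomChild] at hvm
      omega
    rw [broomPerm_broomChild]
    simp [broomParent, hq]
  · by_cases hq : (q : ℕ) = 0
    · exact absurd (by simp [broomParent, hq]) hv
    · have := Nat.le_mul_of_pos_right m (Nat.pos_of_ne_zero hq)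
      simp only [broomParent, hq, if_false] at hvm
      omega

theorem exists_broomChild_eq [NeZero n] {v : Fin n} (hv : v ≠ 0) (hvk : v.val ≤ k * m) :
    ∃ (j : Fin m) (q : Fin k), broomChild hn j q = v := by
  have hv' : v.val ≠ 0 := Fin.val_ne_zero_iff.2 hv
  have hm : 0 < m := Nat.pos_of_mul_pos_left (a := k) (by omega)
  have hq : (v.val - 1) / m < k := by rw [Nat.div_lt_iff_lt_mul hm]; omega
  refine ⟨⟨(v.val - 1) % m, Nat.mod_lt _ hm⟩, ⟨_, hq⟩, Fin.ext ?_⟩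
  have := Nat.mod_add_div (v.val - 1) m
  simp only [broomChild]
  omega

end Broom

section Cap

variable {k n : ℕ} (hn : 2 * k + 2 ≤ n)

/-- A matching of size `k` that joins each of the last `k` vertices to a smaller one and avoids
the vertices `0` and `1`. The edges may overlap those of the broom: `k` of them are needed for the
cycle type, even when fewer than `k` vertices are left over. -/
def capMatching : Fin k ⊕ Fin k ↪ Fin n where
  toFun := Sum.elim (fun i => ⟨n - 1 - i, by omega⟩) (fun i => ⟨2 + i, by omega⟩)
  inj' := by
    refine Function.Injective.sumElim ?_ ?_ ?_ <;> intro i j <;>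
      simp only [ne_eq, Fin.ext_iff] <;> omega

/-- The involution that exchanges the ends of the edges of `capMatching hn`. -/
def capPerm : Perm (Fin n) := matchingPerm (capMatching hn)

theorem capPerm_apply_lt {v : Fin n} (hv : n ≤ v.val + k) : capPerm hn v < v := by
  let i : Fin k := ⟨n - 1 - v, by omega⟩
  have hvi : capMatching hn (.inl i) = v := Fin.ext (Nat.sub_sub_self (by omega : v.val ≤ n - 1))
  rw [← hvi, capPerm, matchingPerm_apply_inl, Fin.lt_def]
  simp only [capMatching, Function.Embedding.coeFn_mk, Sum.elim_inl, Sum.elim_inr]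
  omega

theorem capPerm_apply_eq_self {v : Fin n} (hv : v.val < 2) : capPerm hn v = v := by
  refine matchingPerm_apply_of_notMem_range _ ?_
  rintro ⟨i | i, rfl⟩ <;>
    simp only [capMatching, Function.Embedding.coeFn_mk, Sum.elim_inl, Sum.elim_inr] at hv <;>
    omega

end Cap

section Generators

variable {k m n : ℕ} (hm : 2 ≤ m) (hn : k * m < n) (hcap : 2 * k + 2 ≤ n)

/-- The generating set for the upper bound: the involutions of the `m` matchings of the broom and
of the matching that attaches the remaining vertices. -/
def broomGenerators : Finset (Perm (Fin n)) :=
  insert (capPerm hcap) (Finset.univ.image fun j => broomPerm hn j hm)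

variable {hm hn hcap}

theorem mem_broomGenerators {g : Perm (Fin n)} :
    g ∈ broomGenerators hm hn hcap ↔ g = capPerm hcap ∨ ∃ j, broomPerm hn j hm = g := by
  simp [broomGenerators]

theorem cycleType_of_mem_broomGenerators {g : Perm (Fin n)} (hg : g ∈ broomGenerators hm hn hcap) :
    g.cycleType = Multiset.replicate k 2 := by
  rcases mem_broomGenerators.1 hg with rfl | ⟨j, rfl⟩
  · exact (cycleType_matchingPerm _).trans (by rw [Fintype.card_fin])
  · exact (cycleType_matchingPerm _).trans (by rw [Fintype.card_fin])

theorem card_broomGenerators_le : (broomGenerators hm hn hcap).card ≤ m + 1 := by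
  refine (Finset.card_insert_le _ _).trans (Nat.add_le_add_right ?_ 1)
  exact Finset.card_image_le.trans_eq (Finset.card_fin m)

theorem isPretransitive_closure_broomGenerators (hn' : n ≤ k * (m + 1) + 1) :
    IsPretransitive (Subgroup.closure (broomGenerators hm hn hcap : Set (Perm (Fin n))))
      (Fin n) := by
  have : NeZero n := ⟨by omega⟩
  refine isPretransitive_closure_of_exists_apply_lt fun v hv => ?_
  rcases le_or_gt v.val (k * m) with hvk | hvk
  · obtain ⟨j, q, rfl⟩ := exists_broomChild_eq hn hv hvk
    refine ⟨broomPerm hn j hm, mem_broomGenerators.2 (.inr ⟨j, rfl⟩), ?_⟩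
    rw [broomPerm_broomChild]
    exact broomParent_lt_broomChild hn j q
  · exact ⟨capPerm hcap, mem_broomGenerators.2 (.inl rfl), capPerm_apply_lt hcap (by grind)⟩

theorem apply_eq_or_eq_zero_of_mem_broomGenerators [NeZero n] {g : Perm (Fin n)}
    (hg : g ∈ broomGenerators hm hn hcap) {v : Fin n} (hv : v.val = 1) :
    g v = v ∨ g v = 0 := by
  rcases mem_broomGenerators.1 hg with rfl | ⟨j, rfl⟩
  · exact .inl (capPerm_apply_eq_self hcap (by omega))
  · exact broomPerm_apply_eq_or_eq_zero hn j hm (Fin.val_ne_zero_iff.1 (by omega)) (by omega)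

theorem closure_broomGenerators_eq_top (hk : Odd k) (hkm : k = 1 ∨ 4 ≤ m)
    (hn' : n ≤ k * (m + 1) + 1) :
    Subgroup.closure (broomGenerators hm hn hcap : Set (Perm (Fin n))) = ⊤ := by
  have : NeZero n := ⟨by omega⟩
  have := isPretransitive_closure_broomGenerators (hm := hm) (hn := hn) (hcap := hcap) hn'
  let i : Fin m := ⟨0, by omega⟩
  -- The vertices of the `j`-th matching other than the root are `j` or `j + 1` modulo `m`.
  let j : Fin m := ⟨m / 2, by omega⟩
  have hmem (j : Fin m) : broomPerm hn j hm ∈ broomGenerators hm hn hcap :=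
    mem_broomGenerators.2 (.inr ⟨j, rfl⟩)
  have hinter : (broomPerm hn i hm).support ∩ (broomPerm hn j hm).support = {0} := by
    refine support_broomPerm_inter_support_broomPerm hn hm hk.pos ?_ (hkm.imp_right fun _ => ?_)
    · simp only [i, j, Fin.mk_lt_mk]; omega
    · simp only [i, j]; omega
  have hleaf : (broomPerm hn i hm 0).val = 1 := by
    have hroot : broomParent hn i ⟨0, hk.pos⟩ = 0 := by simp [broomParent]
    rw [← hroot, broomPerm_broomParent]
    simp [broomChild, i]
  have hsign : sign (broomPerm hn i hm) = -1 := by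
    rw [sign_of_cycleType, cycleType_of_mem_broomGenerators (hmem i)]
    simp [pow_add, pow_mul, hk.neg_one_pow]
  exact closure_eq_top_of_support_inter_eq_singleton (hmem i) (hmem j) hinter
    (fun g hg => apply_eq_or_eq_zero_of_mem_broomGenerators hg hleaf) ⟨_, hmem i, hsign⟩

end Generators

theorem exists_finset_card_le_ceilDiv_closure_eq_top {k n : ℕ} (hk : Odd k) (hn : 5 * k ≤ n + 1) :
    ∃ T : Finset (Perm (Fin n)), (∀ g ∈ T, g.cycleType = Multiset.replicate k 2) ∧
      Subgroup.closure (T : Set (Perm (Fin n))) = ⊤ ∧ T.card ≤ (n - 1) ⌈/⌉ k := by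
  have ceilDiv_le (c : ℕ) : (n - 1) ⌈/⌉ k ≤ c ↔ n - 1 ≤ k * c := ceilDiv_le_iff_le_mul hk.pos
  have hk_pos := hk.pos
  obtain ⟨m, hm⟩ : ∃ m, (n - 1) ⌈/⌉ k = m + 1 := by
    refine Nat.exists_eq_add_one.2 (Nat.pos_of_ne_zero fun h => ?_)
    have := (ceilDiv_le 0).1 h.le
    omega
  have hn_le : n - 1 ≤ k * (m + 1) := (ceilDiv_le _).1 hm.le
  have lt_hn : k * m < n - 1 := lt_of_not_ge ((ceilDiv_le m).not.1 (by omega))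
  have hkm : k = 1 ∨ 4 ≤ m := by
    by_contra! h
    have := Nat.mul_le_mul_left k (Nat.succ_le_of_lt h.2)
    grind
  have hm2 : 2 ≤ m := by
    rcases hkm with rfl | h <;> omega
  have hcap : 2 * k + 2 ≤ n := by
    have := Nat.mul_le_mul_left k hm2
    omega
  exact ⟨broomGenerators hm2 (by omega) hcap, fun g => cycleType_of_mem_broomGenerators,
    closure_broomGenerators_eq_top hk hkm (by omega), card_broomGenerators_le.trans_eq hm.symm⟩

theorem stmt_8_general (k n : ℕ) (hk : Odd k) (hn : 5 * k ≤ n + 1) :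
    IsLeast {c : ℕ | ∃ T : Finset (Equiv.Perm (Fin n)),
        (∀ g ∈ T, g.cycleType = Multiset.replicate k 2) ∧
        Subgroup.closure (T : Set (Equiv.Perm (Fin n))) = ⊤ ∧
        T.card = c} ((n - 1) ⌈/⌉ k) := by
  have ceilDiv_le_card (T : Finset (Perm (Fin n)))
      (hT : ∀ g ∈ T, g.cycleType = Multiset.replicate k 2)
      (hgen : Subgroup.closure (T : Set (Perm (Fin n))) = ⊤) : (n - 1) ⌈/⌉ k ≤ T.card := by
    rw [ceilDiv_le_iff_le_mul hk.pos, tsub_le_iff_right, mul_comm]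
    simpa using card_le_card_mul_add_one hT hgen
  obtain ⟨T, hT, hgen, hcard⟩ := exists_finset_card_le_ceilDiv_closure_eq_top hk hn
  refine ⟨⟨T, hT, hgen, hcard.antisymm (ceilDiv_le_card T hT hgen)⟩, ?_⟩
  rintro _ ⟨T, hT, hgen, rfl⟩
  exact ceilDiv_le_card T hT hgen

/-- For odd `k ≥ 1` and `n ≥ k(2k+1)+1`, the minimum cardinality of
a subset of the extended conjugacy class `C(B_k)` in `S_n` (permutations whose
cycle type consists of exactly `k` transpositions) generating `S_n` is
exactly `⌈(n−1)/k⌉`. -/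
theorem stmt_8 (k n : ℕ) (hk : Odd k) (hk1 : 1 ≤ k) (hn : k * (2 * k + 1) + 1 ≤ n) :
    IsLeast {c : ℕ | ∃ T : Finset (Equiv.Perm (Fin n)),
        (∀ g ∈ T, g.cycleType = Multiset.replicate k 2) ∧
        Subgroup.closure (T : Set (Equiv.Perm (Fin n))) = ⊤ ∧
        T.card = c} ((n - 1) ⌈/⌉ k) :=
  stmt_8_general k n hk (by nlinarith [sq_nonneg ((k : ℤ) - 1)])
end
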